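/- In every left semi-universally flexible loop, for all x, y and all integers m, n: if xᵐ·xⁿ = x^(m+n) then x^(m+1)·xⁿ = x^(m+n+1), where integer powers are defined left-associatedly by x⁰ = 1, x^(n+1) = x·xⁿ, and x^(n−1) = x\xⁿ; in particular x·(xᵐ·xⁿ) = x^(m+1)·xⁿ for all m, n. -/

import Mathlib

/-- A loop `(Q, ·, \, /, 1)`: `mul x y = x·y`, `ld x y = x\y`, `rd x y = x/y`. -/
structure LoopStr (Q : Type*) where
  mul : Q → Q → Q
  ld : Q → Q → Q
  rd : Q → Q → Q
  one : Q
  ld_mul : ∀ x y, ld x (mul x y) = y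
  rd_mul : ∀ x y, rd (mul y x) x = y
  mul_ld : ∀ x y, mul x (ld x y) = y
  mul_rd : ∀ x y, mul (rd y x) x = y
  one_mul : ∀ x, mul one x = x
  mul_one : ∀ x, mul x one = x

/-!
Writing `x = a·u` and `y = b·u`, the left SUF law becomes
`((a·(b·u))/u)·(a·u) = a·(b·(a·u))`. Hence, for fixed `a`, `b`, `c`, the equation
`a·(b·u) = c·u` holds at `u` if and only if it holds at `a·u`. For `c = a·b` it holds at `u = 1`,
so it holds along the whole orbit of `1` under left multiplication by `a`, that is, at every
integer power of `a`.
-/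

namespace LoopStr

variable {Q : Type*} {L : LoopStr Q} {a b c u : Q}

/-- Left semi-universal flexibility: every left principal isotope `x ∘ y = (x/u)·y` is flexible,
written out as the identity `x ∘ (y ∘ x) = (x ∘ y) ∘ x`. -/
def IsLeftSUF (L : LoopStr Q) : Prop :=
  ∀ x y u, L.mul (L.rd x u) (L.mul (L.rd y u) x) = L.mul (L.rd (L.mul (L.rd x u) y) u) x

theorem rd_eq_iff_eq_mul : L.rd a u = c ↔ a = L.mul c u :=
  ⟨fun h => by rw [← h, L.mul_rd], fun h => by rw [h, L.rd_mul]⟩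

theorem mul_left_inj : L.mul a u = L.mul b u ↔ a = b := by
  rw [← rd_eq_iff_eq_mul, L.rd_mul]

theorem IsLeftSUF.rd_mul_mul (hL : L.IsLeftSUF) (a b u : Q) :
    L.mul (L.rd (L.mul a (L.mul b u)) u) (L.mul a u) = L.mul a (L.mul b (L.mul a u)) := by
  simpa only [L.rd_mul] using (hL (L.mul a u) (L.mul b u) u).symm

theorem IsLeftSUF.mul_mul_mul_eq_iff (hL : L.IsLeftSUF) :
    L.mul a (L.mul b (L.mul a u)) = L.mul c (L.mul a u) ↔ L.mul a (L.mul b u) = L.mul c u := by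
  rw [← hL.rd_mul_mul, mul_left_inj, rd_eq_iff_eq_mul]

end LoopStr

theorem lsuf_pow_step_general {Q : Type*} {L : LoopStr Q} (hL : L.IsLeftSUF) {x : Q} {p : ℤ → Q}
    (p_zero : p 0 = L.one) (p_succ : ∀ n, p (n + 1) = L.mul x (p n)) (y : Q) (n : ℤ) :
    L.mul x (L.mul y (p n)) = L.mul (L.mul x y) (p n) := by
  induction n using Int.induction_on with
  | zero => rw [p_zero, L.mul_one, L.mul_one]
  | succ k ih =>
    rw [p_succ]
    exact hL.mul_mul_mul_eq_iff.2 ih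
  | pred k ih =>
    rw [← sub_add_cancel (-(k : ℤ)) 1, p_succ] at ih
    exact hL.mul_mul_mul_eq_iff.1 ih

/-- In a left SUF loop, if `xᵐ·xⁿ = x^(m+n)` then `x^(m+1)·xⁿ = x^(m+n+1)`;
in particular `x·(xᵐ·xⁿ) = x^(m+1)·xⁿ`. -/
theorem lsuf_pow_step {Q : Type*} (L : LoopStr Q)
    (lsuf : ∀ x y u,
      L.mul (L.rd x u) (L.mul (L.rd y u) x)
        = L.mul (L.rd (L.mul (L.rd x u) y) u) x)
    (pow : Q → ℤ → Q)
    (pow_zero : ∀ x, pow x 0 = L.one)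
    (pow_succ : ∀ x (n : ℤ), pow x (n + 1) = L.mul x (pow x n))
    (pow_pred : ∀ x (n : ℤ), pow x (n - 1) = L.ld x (pow x n)) :
    ∀ x : Q, ∀ m n : ℤ,
      (L.mul (pow x m) (pow x n) = pow x (m + n) →
        L.mul (pow x (m + 1)) (pow x n) = pow x (m + n + 1))
      ∧ L.mul x (L.mul (pow x m) (pow x n))
          = L.mul (pow x (m + 1)) (pow x n) := by
  intro x m n
  have assoc := lsuf_pow_step_general lsuf (pow_zero x) (pow_succ x) (pow x m) n
  exact ⟨fun h => by rw [pow_succ, ← assoc, h, pow_succ], by rw [pow_succ, assoc]⟩
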